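/- arXiv:2302.13901 — 2 statements merged into one kernel-verified Lean document; each statement's English description precedes it below -/
import Mathlib

section
/- For every real d with 0 ≤ d < 4/5, the function (x,y) ↦ x^{3-3d} y^{1-d} (1-xy)^{-d} · ₂F₁(1,d;2-d;x) · ₂F₁(1,d;2-d;y) is integrable on the open unit square (0,1) × (0,1). -/
open Real MeasureTheory

/-- Pochhammer symbol `(a)_k = a (a+1) ⋯ (a+k-1)` for real `a`. -/
noncomputable def poch (a : ℝ) (k : ℕ) : ℝ := (ascPochhammer ℝ k).eval a

/-- Gaussian hypergeometric function `₂F₁(a,b;c;z)`. -/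
noncomputable def hyp2F1 (a b c z : ℝ) : ℝ :=
  ∑' k : ℕ, (poch a k * poch b k) / poch c k * z ^ k / (Nat.factorial k)

/-- Generalized hypergeometric function `₃F₂(a₁,a₂,a₃;b₁,b₂;z)`. -/
noncomputable def hyp3F2 (a₁ a₂ a₃ b₁ b₂ z : ℝ) : ℝ :=
  ∑' k : ℕ, (poch a₁ k * poch a₂ k * poch a₃ k) / (poch b₁ k * poch b₂ k) * z ^ k /
    (Nat.factorial k)

/-- Generalized hypergeometric function `₄F₃(a₁,a₂,a₃,a₄;b₁,b₂,b₃;z)`. -/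
noncomputable def hyp4F3 (a₁ a₂ a₃ a₄ b₁ b₂ b₃ z : ℝ) : ℝ :=
  ∑' k : ℕ, (poch a₁ k * poch a₂ k * poch a₃ k * poch a₄ k) /
    (poch b₁ k * poch b₂ k * poch b₃ k) * z ^ k / (Nat.factorial k)


lemma aux_poch_succ (a : ℝ) (k : ℕ) : poch a (k + 1) = poch a k * (a + k) := by
  simp [poch, ascPochhammer_succ_eval]

lemma aux_poch_zero (a : ℝ) : poch a 0 = 1 := by simp [poch]

lemma aux_poch_one (k : ℕ) : poch 1 k = (Nat.factorial k : ℝ) := by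
  simp [poch]

lemma aux_poch_pos (a : ℝ) (ha : 0 < a) (k : ℕ) : 0 < poch a k := ascPochhammer_pos k a ha

lemma aux_poch_nonneg (a : ℝ) (ha : 0 ≤ a) (k : ℕ) : 0 ≤ poch a k := by
  induction k with
  | zero => simp [aux_poch_zero]
  | succ k ih => rw [aux_poch_succ]; positivity

lemma aux_binom (e x : ℝ) (hx : x ∈ Set.Ioo (0:ℝ) 1) :
    HasSum (fun k : ℕ => poch e k / (Nat.factorial k) * x ^ k) ((1 - x) ^ (-e)) := by
  have h := (Real.one_div_one_sub_rpow_hasFPowerSeriesOnBall_zero e).hasSum (y := x) (by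
    have : ‖x‖₊ < 1 := by
      rw [← NNReal.coe_lt_coe]; simp [abs_of_pos hx.1, hx.2]
    simpa [enorm_eq_nnnorm] using this)
  have h2 : (1 - x) ^ (-e) = 1 / (1 - (0 + x)) ^ e := by
    rw [rpow_neg (by linarith [hx.2])]; simp
  rw [h2]
  refine HasSum.congr_fun h ?_
  intro k
  have h3 : Ring.choose (e + k - 1) k = poch e k / (Nat.factorial k) := by
    rw [Ring.choose_eq_smul, Polynomial.descPochhammer_smeval_eq_ascPochhammer,
      Polynomial.ascPochhammer_smeval_eq_eval, poch]
    have : e + (k:ℝ) - 1 - k + 1 = e := by ring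
    rw [this]
    simp [div_eq_inv_mul]
  simp [h3, FormalMultilinearSeries.ofScalars]

lemma aux_coef (d e : ℝ) (hd0 : 0 ≤ d) (hd1 : d < 4 / 5) (he : 0 < e) (he2 : 2 * d - 1 < e) :
    ∃ C : ℝ, 0 ≤ C ∧ ∀ k : ℕ, poch d k / poch (2 - d) k ≤ C * (poch e k / (Nat.factorial k)) := by
  set a : ℕ → ℝ := fun k => poch d k / poch (2 - d) k with ha
  set b : ℕ → ℝ := fun k => poch e k / (Nat.factorial k) with hb
  have ha0 : ∀ k, 0 ≤ a k := fun k =>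
    div_nonneg (aux_poch_nonneg d hd0 k) (aux_poch_nonneg _ (by linarith) k)
  have hb0 : ∀ k, 0 < b k := fun k =>
    div_pos (aux_poch_pos e he k) (by positivity)
  have has : ∀ k : ℕ, a (k+1) = a k * ((d + k) / (2 - d + k)) := fun k => by
    simp only [ha, aux_poch_succ]; rw [mul_div_mul_comm]
  have hbs : ∀ k : ℕ, b (k+1) = b k * ((e + k) / (k + 1)) := fun k => by
    simp only [hb, aux_poch_succ, Nat.factorial_succ]; push_cast
    rw [mul_comm ((k:ℝ)+1), mul_div_mul_comm]
  obtain ⟨K, hK⟩ := exists_nat_gt (d / (e + 1 - 2 * d))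
  rw [div_lt_iff₀ (by linarith)] at hK
  refine ⟨∑ j ∈ Finset.range (K+1), a j / b j,
    Finset.sum_nonneg fun j _ => div_nonneg (ha0 j) (hb0 j).le, ?_⟩
  set C := ∑ j ∈ Finset.range (K+1), a j / b j with hC
  have hsmall : ∀ k, k ≤ K → a k ≤ C * b k := fun k hk => by
    rw [← div_le_iff₀ (hb0 k)]
    exact Finset.single_le_sum (f := fun j => a j / b j)
      (fun j _ => div_nonneg (ha0 j) (hb0 j).le) (Finset.mem_range.2 (by omega))
  have hlarge : ∀ k, K ≤ k → a k ≤ C * b k := fun k hk => by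
    induction k, hk using Nat.le_induction with
    | base => exact hsmall K le_rfl
    | succ k hk ih =>
      rw [has, hbs, ← mul_assoc]
      have hkK : (K:ℝ) ≤ k := by exact_mod_cast hk
      have hk0 : (0:ℝ) ≤ k := by positivity
      refine mul_le_mul ih ?_ (div_nonneg (by linarith) (by linarith)) ((ha0 k).trans ih)
      rw [div_le_div_iff₀ (by linarith) (by linarith)]
      have : (K:ℝ) * (e + 1 - 2 * d) ≤ k * (e + 1 - 2 * d) :=
        mul_le_mul_of_nonneg_right hkK (by linarith)
      have h5 : 0 ≤ e * (2 - d) := mul_nonneg he.le (by linarith)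
      nlinarith
  intro k
  rcases le_total k K with h | h
  · exact hsmall k h
  · exact hlarge k h

lemma aux_G (d e : ℝ) (hd0 : 0 ≤ d) (hd1 : d < 4 / 5) (he : 0 < e) (he2 : 2 * d - 1 < e) :
    ∃ (G : ℝ → ℝ) (C : ℝ), Measurable G ∧ 0 ≤ C ∧ ∀ x ∈ Set.Ioo (0:ℝ) 1,
      hyp2F1 1 d (2 - d) x = G x ∧ 0 ≤ G x ∧ G x ≤ C * (1 - x) ^ (-e) := by
  obtain ⟨C, hC0, hC⟩ := aux_coef d e hd0 hd1 he he2
  set t : ℕ → ℝ → ℝ := fun k x => poch d k / poch (2 - d) k * x ^ k with ht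
  refine ⟨fun x => (∑' k, ENNReal.ofReal (t k x)).toReal, C, ?_, hC0, ?_⟩
  · refine Measurable.ennreal_toReal (Measurable.tsum fun k => ?_)
    refine Measurable.ennreal_ofReal ?_
    simp only [ht]
    fun_prop
  intro x hx
  have ht0 : ∀ k, 0 ≤ t k x := fun k => mul_nonneg
    (div_nonneg (aux_poch_nonneg d hd0 k) (aux_poch_nonneg _ (by linarith) k))
    (pow_nonneg hx.1.le k)
  have hs := (aux_binom e x hx).mul_left C
  have hle : ∀ k, t k x ≤ C * (poch e k / (Nat.factorial k) * x ^ k) := fun k => by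
    rw [← mul_assoc]
    exact mul_le_mul_of_nonneg_right (hC k) (pow_nonneg hx.1.le k)
  have hsum : Summable (fun k => t k x) := Summable.of_nonneg_of_le ht0 hle hs.summable
  have hG : (∑' k, ENNReal.ofReal (t k x)).toReal = ∑' k, t k x := by
    rw [← ENNReal.ofReal_tsum_of_nonneg ht0 hsum, ENNReal.toReal_ofReal (tsum_nonneg ht0)]
  refine ⟨?_, ENNReal.toReal_nonneg, ?_⟩
  · simp only [hG, hyp2F1]
    refine tsum_congr fun k => ?_
    have : (Nat.factorial k : ℝ) ≠ 0 := by positivity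
    rw [aux_poch_one]
    simp only [ht]
    field_simp
  · simp only [hG]
    exact hasSum_le hle hsum.hasSum hs

lemma aux_int (r : ℝ) (hr : -1 < r) :
    IntegrableOn (fun x : ℝ => (1 - x) ^ r) (Set.Ioo (0:ℝ) 1) := by
  have h := (intervalIntegral.intervalIntegrable_rpow' (a := 0) (b := 1) hr).comp_sub_left 1
  simp only [sub_zero, sub_self] at h
  have h2 := (intervalIntegrable_iff_integrableOn_Ioc_of_le zero_le_one).1 h.symm
  exact h2.mono_set Set.Ioo_subset_Ioc_self

theorem integrableOn_unit_square (d : ℝ) (hd0 : 0 ≤ d) (hd1 : d < 4 / 5) :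
    IntegrableOn
      (fun p : ℝ × ℝ =>
        p.1 ^ (3 - 3 * d) * p.2 ^ (1 - d) * (1 - p.1 * p.2) ^ (-d) *
          hyp2F1 1 d (2 - d) p.1 * hyp2F1 1 d (2 - d) p.2)
      (Set.Ioo (0:ℝ) 1 ×ˢ Set.Ioo (0:ℝ) 1) := by
  obtain ⟨e, he1, he2⟩ := exists_between (show max 0 (2 * d - 1) < 1 - d / 2 from
    max_lt (by linarith) (by linarith))
  have he0 : 0 < e := (le_max_left _ _).trans_lt he1
  have hed : 2 * d - 1 < e := (le_max_right _ _).trans_lt he1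
  obtain ⟨G, C, hGm, hC0, hG⟩ := aux_G d e hd0 hd1 he0 hed
  have hms : MeasurableSet (Set.Ioo (0:ℝ) 1 ×ˢ Set.Ioo (0:ℝ) 1) :=
    measurableSet_Ioo.prod measurableSet_Ioo
  have hint1 := (aux_int (-e - d / 2) (by linarith)).const_mul C
  have hint : IntegrableOn (fun p : ℝ × ℝ =>
      (C * (1 - p.1) ^ (-e - d / 2)) * (C * (1 - p.2) ^ (-e - d / 2)))
      (Set.Ioo (0:ℝ) 1 ×ˢ Set.Ioo (0:ℝ) 1) := by
    have := Integrable.mul_prod hint1 hint1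
    rw [Measure.prod_restrict] at this
    exact this
  have hmain : IntegrableOn
      (fun p : ℝ × ℝ =>
        p.1 ^ (3 - 3 * d) * p.2 ^ (1 - d) * (1 - p.1 * p.2) ^ (-d) * G p.1 * G p.2)
      (Set.Ioo (0:ℝ) 1 ×ˢ Set.Ioo (0:ℝ) 1) := by
    refine Integrable.mono' hint (Measurable.aestronglyMeasurable (by fun_prop)) ?_
    refine (ae_restrict_iff' hms).2 (Filter.Eventually.of_forall ?_)
    rintro ⟨x, y⟩ ⟨hx, hy⟩
    simp only at hx hy ⊢
    obtain ⟨-, hx0, hx1⟩ := hG x hx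
    obtain ⟨-, hy0, hy1⟩ := hG y hy
    have hu : 0 < 1 - x := by linarith [hx.2]
    have hv : 0 < 1 - y := by linarith [hy.2]
    have hux : 1 - x ≤ 1 - x * y := by nlinarith [hx.1]
    have hvy : 1 - y ≤ 1 - x * y := by nlinarith [hy.1]
    have hw : 0 < 1 - x * y := by linarith
    have hA : x ^ (3 - 3 * d) ≤ 1 := rpow_le_one hx.1.le hx.2.le (by linarith)
    have hB : y ^ (1 - d) ≤ 1 := rpow_le_one hy.1.le hy.2.le (by linarith)
    have hA0 : 0 ≤ x ^ (3 - 3 * d) := rpow_nonneg hx.1.le _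
    have hB0 : 0 ≤ y ^ (1 - d) := rpow_nonneg hy.1.le _
    have hW0 : 0 ≤ (1 - x * y) ^ (-d) := rpow_nonneg hw.le _
    have hW : (1 - x * y) ^ (-d) ≤ (1 - x) ^ (-(d / 2)) * (1 - y) ^ (-(d / 2)) := by
      have : -d = -(d / 2) + -(d / 2) := by ring
      rw [this, rpow_add hw]
      exact mul_le_mul (rpow_le_rpow_of_nonpos hu hux (by linarith))
        (rpow_le_rpow_of_nonpos hv hvy (by linarith)) (rpow_nonneg hw.le _) (rpow_nonneg hu.le _)
    rw [Real.norm_of_nonneg (by positivity)]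
    have hAB : x ^ (3 - 3 * d) * y ^ (1 - d) ≤ 1 := mul_le_one₀ hA hB0 hB
    calc x ^ (3 - 3 * d) * y ^ (1 - d) * (1 - x * y) ^ (-d) * G x * G y
        ≤ 1 * ((1 - x) ^ (-(d / 2)) * (1 - y) ^ (-(d / 2))) * (C * (1 - x) ^ (-e))
          * (C * (1 - y) ^ (-e)) := by gcongr
      _ = _ := by
        have : -e - d / 2 = -(d / 2) + -e := by ring
        rw [this, rpow_add hu, rpow_add hv]; ring
  refine hmain.congr_fun ?_ hms
  rintro ⟨x, y⟩ ⟨hx, hy⟩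
  simp only at hx hy ⊢
  rw [(hG x hx).1, (hG y hy).1]
end

section
/- Let p, q, r, s be positive real numbers and let t be a real number with t < q + s. Then ∫₀¹∫₀¹ x^{p-1}(1-x)^{q-1} y^{r-1}(1-y)^{s-1} (1-xy)^{-t} dx dy = [Γ(p)Γ(q)/Γ(p+q)] · [Γ(r)Γ(s)/Γ(r+s)] · ₃F₂(t, p, r; p+q, r+s; 1). -/
open Real MeasureTheory

open Set Filter Topology

lemma poch_succ' (a : ℝ) (n : ℕ) : poch a (n+1) = poch a n * (a + n) := by
  unfold poch; rw [ascPochhammer_succ_eval]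

lemma poch_pos' (a : ℝ) (ha : 0 < a) (n : ℕ) : 0 < poch a n := ascPochhammer_pos n a ha

lemma poch_eq_prod (a : ℝ) (n : ℕ) : poch a n = ∏ j ∈ Finset.range n, (a + j) := by
  induction n with
  | zero => simp [poch]
  | succ n ih => rw [poch_succ', ih, Finset.prod_range_succ]

lemma Gamma_add_nat' (a : ℝ) (ha : 0 < a) (n : ℕ) : Gamma (a + n) = poch a n * Gamma a := by
  induction n with
  | zero => simp [poch]
  | succ n ih =>
    have h : a + (n:ℝ) ≠ 0 := by positivity
    push_cast
    rw [← add_assoc, Real.Gamma_add_one h, ih, poch_succ']; ring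

noncomputable def bet (a b : ℝ) : ℝ := Gamma a * Gamma b / Gamma (a + b)

lemma bet_pos (a b : ℝ) (ha : 0 < a) (hb : 0 < b) : 0 < bet a b := by
  unfold bet
  have := Gamma_pos_of_pos ha
  have := Gamma_pos_of_pos hb
  have := Gamma_pos_of_pos (add_pos ha hb)
  positivity

lemma bet_add_nat (a b : ℝ) (ha : 0 < a) (hb : 0 < b) (k : ℕ) :
    bet (a + k) b = bet a b * (poch a k / poch (a + b) k) := by
  unfold bet
  rw [show a + (k:ℝ) + b = (a + b) + k by ring, Gamma_add_nat' a ha, Gamma_add_nat' (a+b) (by positivity)]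
  have := (Gamma_pos_of_pos (add_pos ha hb)).ne'
  have := (poch_pos' (a+b) (by positivity) k).ne'
  field_simp

lemma poch_ratio_le (a b : ℝ) (ha : 0 < a) (hb : 0 < b) (k : ℕ) :
    poch a k / poch (a + b) k ≤ 1 := by
  rw [div_le_one (poch_pos' _ (by positivity) k), poch_eq_prod, poch_eq_prod]
  apply Finset.prod_le_prod
  · intros; positivity
  · intros; linarith

lemma bet_integrable (a b : ℝ) (ha : 0 < a) (hb : 0 < b) :
    IntegrableOn (fun x : ℝ => x ^ (a-1) * (1-x)^(b-1)) (Ioo 0 1) := by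
  have h := Complex.betaIntegral_convergent (u := a) (v := b) (by simpa) (by simpa)
  rw [intervalIntegrable_iff_integrableOn_Ioo_of_le zero_le_one] at h
  refine (IntegrableOn.congr_fun h.re ?_ measurableSet_Ioo)
  intro x hx
  have h1 : (0:ℝ) ≤ 1 - x := by linarith [hx.2]
  have : (x : ℂ) ^ ((a:ℂ) - 1) * (1 - (x : ℂ)) ^ ((b:ℂ) - 1)
     = ((x ^ (a-1) * (1-x)^(b-1) : ℝ) : ℂ) := by
    push_cast [Complex.ofReal_cpow hx.1.le, Complex.ofReal_cpow h1]; rfl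
  simp only [this]
  simp

lemma bet_integral (a b : ℝ) (ha : 0 < a) (hb : 0 < b) :
    ∫ x in Ioo (0:ℝ) 1, x ^ (a-1) * (1-x)^(b-1) = bet a b := by
  have h := Complex.betaIntegral_eq_Gamma_mul_div (a:ℂ) b (by simpa) (by simpa)
  unfold Complex.betaIntegral at h
  rw [intervalIntegral.integral_of_le zero_le_one, integral_Ioc_eq_integral_Ioo] at h
  rw [setIntegral_congr_fun (g := fun x : ℝ => ((x ^ (a-1) * (1-x)^(b-1) : ℝ) : ℂ))
    measurableSet_Ioo, integral_complex_ofReal] at h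
  · rw [← Complex.ofReal_add, Complex.Gamma_ofReal, Complex.Gamma_ofReal, Complex.Gamma_ofReal] at h
    unfold bet
    exact_mod_cast h
  · intro x hx
    have h1 : (0:ℝ) ≤ 1 - x := by linarith [hx.2]
    push_cast [Complex.ofReal_cpow hx.1.le, Complex.ofReal_cpow h1]; rfl

lemma bet_series (u v : ℝ) (hu : 0 < u) (hv : 0 < v) (c : ℕ → ℝ) (f : ℝ → ℝ)
    (hf : ∀ y ∈ Ioo (0:ℝ) 1, HasSum (fun k => c k * y ^ k) (f y))
    (hs : Summable fun k => |c k| * bet (u + k) v) :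
    ∫ y in Ioo (0:ℝ) 1, y ^ (u-1) * (1-y)^(v-1) * f y = ∑' k, c k * bet (u + k) v := by
  have hk : ∀ k : ℕ, 0 < u + k := fun k => by positivity
  let F : ℕ → ℝ → ℝ := fun k y => c k * (y ^ (u + k - 1) * (1-y)^(v-1))
  have h := hasSum_integral_of_summable_integral_norm (μ := volume.restrict (Ioo (0:ℝ) 1)) (F := F)
    (fun k => (bet_integrable (u+k) v (hk k) hv).const_mul (c k)) ?_
  · have e : ∀ k : ℕ, ∫ y in Ioo (0:ℝ) 1, F k y = c k * bet (u+k) v := fun k => by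
      simp only [F]
      rw [integral_const_mul, bet_integral _ _ (hk k) hv]
    simp only [e] at h
    rw [h.tsum_eq]
    apply setIntegral_congr_fun measurableSet_Ioo
    intro y hy
    simp only [F]
    have := ((hf y hy).mul_left (y ^ (u-1) * (1-y)^(v-1))).tsum_eq
    rw [← this]
    congr 1
    ext k
    rw [show u + (k:ℝ) - 1 = (u - 1) + k by ring, rpow_add hy.1, rpow_natCast]
    ring
  · convert hs using 2 with k
    rw [← bet_integral _ _ (hk k) hv, ← integral_const_mul]
    apply setIntegral_congr_fun measurableSet_Ioo
    intro y hy
    have h1 : (0:ℝ) ≤ 1 - y := by linarith [hy.2]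
    have h2 := hy.1.le
    simp only [F, norm_eq_abs, abs_mul]
    rw [abs_of_nonneg (rpow_nonneg h2 _), abs_of_nonneg (rpow_nonneg h1 _)]

lemma binom_series (t z : ℝ) (hz : |z| < 1) :
    HasSum (fun k : ℕ => poch t k / (Nat.factorial k) * z ^ k) ((1 - z) ^ (-t)) := by
  have h := (Real.one_div_one_sub_rpow_hasFPowerSeriesOnBall_zero t).hasSum (y := z)
    (by simpa [enorm_eq_nnnorm, ← NNReal.coe_lt_coe] using hz)
  have h1 : 0 ≤ 1 - z := by linarith [(abs_lt.1 hz).2]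
  rw [rpow_neg h1]
  simp only [zero_add, one_div] at h
  refine (congrArg (fun g => HasSum g ((1 - z) ^ t)⁻¹) (funext fun k => ?_)).mpr h
  rw [FormalMultilinearSeries.ofScalars_apply_eq]
  rw [← Ring.multichoose_eq, smul_eq_mul]
  congr 1
  have := Ring.factorial_nsmul_multichoose_eq_ascPochhammer t k
  rw [Polynomial.ascPochhammer_smeval_eq_eval] at this
  unfold poch
  rw [← this, nsmul_eq_mul]
  have : (Nat.factorial k : ℝ) ≠ 0 := by positivity
  field_simp

lemma main_summable (p q r s t : ℝ) (hp : 0 < p) (hq : 0 < q)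
    (hr : 0 < r) (hs : 0 < s) (ht : t < q + s) :
    Summable fun k : ℕ => poch t k / (Nat.factorial k) * (poch p k / poch (p+q) k)
      * (poch r k / poch (r+s) k) := by
  by_cases hpole : ∃ m : ℕ, t = -m
  · obtain ⟨m, rfl⟩ := hpole
    apply summable_of_ne_finset_zero (s := Finset.range (m+1))
    intro k hk
    have : poch (-(m:ℝ)) k = 0 := ascPochhammer_eval_neg_coe_nat_of_lt (by simpa using hk)
    simp [this]
  push Not at hpole
  rw [← summable_nat_add_iff 1]
  have key : ∀ a : ℝ, (∀ m : ℕ, a ≠ -m) → ∀ n : ℕ, n ≠ 0 →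
      GammaSeq a n ≠ 0 ∧ poch a (n+1) = (n:ℝ)^a * Nat.factorial n * (GammaSeq a n)⁻¹ := by
    intro a ha n hn
    have h0 : (n:ℝ)^a ≠ 0 := (rpow_pos_of_pos (by positivity) a).ne'
    have h1 : poch a (n+1) ≠ 0 := by
      rw [poch_eq_prod, Finset.prod_ne_zero_iff]
      intro j _ h
      exact ha j (by linarith)
    have h2 : (Nat.factorial n : ℝ) ≠ 0 := by positivity
    unfold GammaSeq
    rw [← poch_eq_prod]
    refine ⟨by positivity, by field_simp⟩
  have np : ∀ a : ℝ, 0 < a → ∀ m : ℕ, a ≠ -m := by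
    intro a ha m h
    have : (0:ℝ) ≤ m := by positivity
    linarith
  have T : Tendsto (fun n => (GammaSeq t n)⁻¹ * (GammaSeq p n)⁻¹ * (GammaSeq r n)⁻¹
      * GammaSeq (p+q) n * GammaSeq (r+s) n) atTop (𝓝 ((Gamma t)⁻¹ * (Gamma p)⁻¹ * (Gamma r)⁻¹
      * Gamma (p+q) * Gamma (r+s))) := by
    have g := GammaSeq_tendsto_Gamma
    exact (((((g t).inv₀ (Gamma_ne_zero hpole)).mul ((g p).inv₀ (Gamma_ne_zero (np p hp)))).mul
      ((g r).inv₀ (Gamma_ne_zero (np r hr)))).mul (g _)).mul (g _)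
  have B := T.isBigO_one ℝ
  have S : Summable fun n : ℕ => (n:ℝ)^(t - q - s - 1) := summable_nat_rpow.2 (by linarith)
  refine summable_of_isBigO_nat S ?_
  have B2 := (Asymptotics.isBigO_refl (fun n : ℕ => (n:ℝ)^(t - q - s) * ((n:ℝ)+1)⁻¹) atTop).mul B
  have B3 : (fun n : ℕ => (n:ℝ)^(t - q - s) * ((n:ℝ)+1)⁻¹ * (1:ℝ)) =O[atTop]
      fun n : ℕ => (n:ℝ)^(t - q - s - 1) := by
    apply Asymptotics.IsBigO.of_bound 1
    filter_upwards [eventually_gt_atTop 0] with n hn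
    have hn' : (0:ℝ) < n := by exact_mod_cast hn
    rw [rpow_sub_one hn'.ne', norm_of_nonneg (by positivity), norm_of_nonneg (by positivity),
      one_mul, mul_one, div_eq_mul_inv]
    gcongr
    linarith
  refine (B2.trans B3).congr' ?_ EventuallyEq.rfl
  filter_upwards [eventually_gt_atTop 0] with n hn
  have hn' : (0:ℝ) < n := by exact_mod_cast hn
  obtain ⟨h1, e1⟩ := key t hpole n hn.ne'
  obtain ⟨h2, e2⟩ := key p (np p hp) n hn.ne'
  obtain ⟨h3, e3⟩ := key r (np r hr) n hn.ne'
  obtain ⟨h4, e4⟩ := key (p+q) (np _ (by positivity)) n hn.ne'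
  obtain ⟨h5, e5⟩ := key (r+s) (np _ (by positivity)) n hn.ne'
  rw [e1, e2, e3, e4, e5, rpow_add hn', rpow_add hn', rpow_sub hn', rpow_sub hn', Nat.factorial_succ]
  push_cast
  have := (rpow_pos_of_pos hn' p).ne'
  have := (rpow_pos_of_pos hn' q).ne'
  have := (rpow_pos_of_pos hn' r).ne'
  have := (rpow_pos_of_pos hn' s).ne'
  have : (Nat.factorial n : ℝ) ≠ 0 := by positivity
  field_simp

theorem double_integral_beta_weights (p q r s t : ℝ) (hp : 0 < p) (hq : 0 < q)
    (hr : 0 < r) (hs : 0 < s) (ht : t < q + s) :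
    (∫ x in (0:ℝ)..1, ∫ y in (0:ℝ)..1,
      x ^ (p - 1) * (1 - x) ^ (q - 1) * y ^ (r - 1) * (1 - y) ^ (s - 1) * (1 - x * y) ^ (-t))
    = Real.Gamma p * Real.Gamma q / Real.Gamma (p + q) *
        (Real.Gamma r * Real.Gamma s / Real.Gamma (r + s)) *
        hyp3F2 t p r (p + q) (r + s) 1 := by
  simp only [intervalIntegral.integral_of_le zero_le_one, integral_Ioc_eq_integral_Ioo]
  set c : ℕ → ℝ := fun k => poch t k / (Nat.factorial k) with hc
  have hbr : ∀ k : ℕ, 0 < bet (r + k) s := fun k => bet_pos _ _ (by positivity) hs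
  have hbp : ∀ k : ℕ, 0 < bet (p + k) q := fun k => bet_pos _ _ (by positivity) hq
  have hsum : Summable fun k : ℕ => c k * bet (r + k) s * bet (p + k) q := by
    refine (congrArg Summable (funext fun k => ?_)).mpr
      ((main_summable p q r s t hp hq hr hs ht).mul_left (bet p q * bet r s))
    rw [bet_add_nat r s hr hs, bet_add_nat p q hp hq]
    ring
  have hle : ∀ k : ℕ, bet (r + k) s ≤ bet r s := fun k => by
    rw [bet_add_nat r s hr hs]
    exact mul_le_of_le_one_right (bet_pos _ _ hr hs).le (poch_ratio_le r s hr hs k)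
  have hin : ∀ x ∈ Ioo (0:ℝ) 1, Summable fun k : ℕ => |c k * x ^ k| * bet (r + k) s := by
    intro x hx
    have h := (binom_series t x (abs_lt.2 ⟨by linarith [hx.1], hx.2⟩)).summable.abs
    refine Summable.of_nonneg_of_le (fun k => mul_nonneg (abs_nonneg _) (hbr k).le)
      (fun k => ?_) (h.mul_right (bet r s))
    exact mul_le_mul_of_nonneg_left (hle k) (abs_nonneg _)
  have hinner : ∀ x ∈ Ioo (0:ℝ) 1, (∫ y in Ioo (0:ℝ) 1,
      x ^ (p - 1) * (1 - x) ^ (q - 1) * y ^ (r - 1) * (1 - y) ^ (s - 1) * (1 - x * y) ^ (-t))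
      = x ^ (p - 1) * (1 - x) ^ (q - 1) * ∑' k : ℕ, (c k * bet (r + k) s) * x ^ k := by
    intro x hx
    have h := bet_series r s hr hs (fun k => c k * x ^ k) (fun y => (1 - x * y) ^ (-t)) ?_ (hin x hx)
    · rw [show (∑' k : ℕ, (c k * bet (r + k) s) * x ^ k) = ∑' k : ℕ, c k * x ^ k * bet (r + k) s
        from tsum_congr fun k => by ring, ← h, ← integral_const_mul]
      congr 1
      ext y
      ring
    · intro y hy
      have := binom_series t (x * y) (by
        rw [abs_of_pos (mul_pos hx.1 hy.1)]
        exact mul_lt_one_of_nonneg_of_lt_one_left hx.1.le hx.2 hy.2.le)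
      simpa [mul_pow, mul_assoc, hc] using this
  rw [setIntegral_congr_fun measurableSet_Ioo hinner]
  rw [bet_series p q hp hq (fun k => c k * bet (r + k) s)]
  · change _ = bet p q * bet r s * _
    unfold hyp3F2
    rw [← tsum_mul_left]
    refine tsum_congr fun k => ?_
    rw [bet_add_nat r s hr hs, bet_add_nat p q hp hq, hc]
    have := (poch_pos' (p+q) (by positivity) k).ne'
    have := (poch_pos' (r+s) (by positivity) k).ne'
    field_simp
    simp
  · intro x hx
    refine Summable.hasSum ((hin x hx).of_norm_bounded fun k => ?_)
    simp only [norm_eq_abs, abs_mul, abs_of_pos (hbr k)]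
    apply le_of_eq; ring
  · refine (congrArg Summable (funext fun k => ?_)).mpr hsum.abs
    simp only [abs_mul, abs_of_pos (hbp k)]
end
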